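/- arXiv:2109.09239 — 6 statements merged into one kernel-verified Lean document; each statement's English description precedes it below -/
import Mathlib

section
/- Assume Condition (A1). For every A₀ > 0 there exist constants K₀, M₀, α₀ > 0, depending only on A₀ and the constants C_ξ, H_ξ, α_ξ of (A1), such that for every θ ∈ ℝⁿ and every M ≥ 0: ℙ_θ( ℓ(|Ĩ(K₀)|) ≥ M₀·ℓ(|I_*(A₀,θ)|) + M ) ≤ H₀·e^{−α₀·M}. -/
open MeasureTheory Finset
open scoped Classical

/-- `ell n k = k * log(q*n/k)` with `q = e^2`; equals `0` at `k = 0` by Lean's conventions. -/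
noncomputable def ell (n k : ℕ) : ℝ := (k : ℝ) * Real.log (Real.exp 2 * n / k)

theorem log_ratio_ge_two {n k : ℕ} (hk : 0 < k) (hkn : k ≤ n) :
    2 ≤ Real.log (Real.exp 2 * n / k) := by
  have hk' : (0 : ℝ) < k := by exact_mod_cast hk
  have hkn' : (k : ℝ) ≤ n := by exact_mod_cast hkn
  rw [Real.le_log_iff_exp_le (by have := hk'.trans_le hkn'; positivity), le_div_iff₀ hk']
  gcongr

theorem two_mul_le_ell {n k : ℕ} (hkn : k ≤ n) : 2 * (k : ℝ) ≤ ell n k := by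
  rcases Nat.eq_zero_or_pos k with rfl | hk
  · simp [ell]
  · unfold ell
    nlinarith [log_ratio_ge_two hk hkn, Nat.cast_nonneg (α := ℝ) k]

theorem ell_nonneg {n k : ℕ} (hkn : k ≤ n) : 0 ≤ ell n k :=
  le_trans (by positivity) (two_mul_le_ell hkn)

theorem mul_log_ratio_le_ell {n k m : ℕ} (hkm : k ≤ m) (hmn : m ≤ n) :
    (k : ℝ) * Real.log (Real.exp 2 * n / m) ≤ ell n k := by
  rcases Nat.eq_zero_or_pos k with rfl | hk
  · simp [ell]
  · have hk' : (0 : ℝ) < k := by exact_mod_cast hk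
    have hm : (0 : ℝ) < m := by exact_mod_cast hk.trans_le hkm
    have hn : (0 : ℝ) < n := by exact_mod_cast (hk.trans_le hkm).trans_le hmn
    unfold ell
    gcongr

theorem ell_card_union_le {n : ℕ} (S J : Finset (Fin n)) :
    ell n (S ∪ J).card ≤ ell n S.card + ell n J.card := by
  have hle : ∀ I : Finset (Fin n), I.card ≤ n := fun I => by simpa using card_le_univ I
  have hS := mul_log_ratio_le_ell (card_le_card (subset_union_left (s₁ := S) (s₂ := J))) (hle _)
  have hJ := mul_log_ratio_le_ell (card_le_card (subset_union_right (s₁ := S) (s₂ := J))) (hle _)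
  rcases Nat.eq_zero_or_pos (S ∪ J).card with h0 | hpos
  · rw [h0]
    simpa [ell] using add_nonneg (ell_nonneg (hle S)) (ell_nonneg (hle J))
  · have hlog := log_ratio_ge_two hpos (hle _)
    have hcard : ((S ∪ J).card : ℝ) ≤ S.card + J.card := by exact_mod_cast card_union_le S J
    have := mul_le_mul_of_nonneg_right hcard (by linarith : (0 : ℝ) ≤ Real.log _)
    rw [ell]
    linarith

/-- The entropy bound `n.choose k ≤ (e n / k) ^ k`, in terms of `ell`. -/
theorem choose_mul_exp_neg_ell_le {n k : ℕ} (hkn : k ≤ n) :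
    (n.choose k : ℝ) * Real.exp (-ell n k) ≤ Real.exp (-k) := by
  rcases Nat.eq_zero_or_pos k with rfl | hk
  · simp [ell]
  have hk' : (0 : ℝ) < k := by exact_mod_cast hk
  have hn : (0 : ℝ) < n := by exact_mod_cast hk.trans_le hkn
  have hexp : Real.exp (ell n k) = (Real.exp 2 * n / k) ^ k := by
    rw [ell, Real.exp_nat_mul, Real.exp_log (by positivity)]
  have hchoose : (n.choose k : ℝ) ≤ (n : ℝ) ^ k / k.factorial := Nat.choose_le_pow_div k n
  have hfact : (k : ℝ) ^ k / k.factorial ≤ Real.exp k := Real.pow_div_factorial_le_exp _ hk'.le k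
  rw [Real.exp_neg, ← div_eq_mul_inv, div_le_iff₀ (Real.exp_pos _), hexp]
  calc (n.choose k : ℝ) ≤ (n : ℝ) ^ k / k.factorial := hchoose
    _ = (n / k : ℝ) ^ k * ((k : ℝ) ^ k / k.factorial) := by
      rw [div_pow]; field_simp
    _ ≤ (n / k : ℝ) ^ k * Real.exp k := by gcongr
    _ = Real.exp (-k) * (Real.exp 2 * n / k) ^ k := by
      have h2 : Real.exp 2 ^ k = Real.exp k * Real.exp k := by
        rw [← Real.exp_nat_mul, ← Real.exp_add]; ring_nf
      rw [mul_div_assoc, mul_pow, h2, Real.exp_neg]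
      field_simp

theorem sum_exp_neg_ell_card_le (n : ℕ) :
    ∑ J : Finset (Fin n), Real.exp (-ell n J.card) ≤ 1 / (1 - Real.exp (-1)) := by
  have hlt : Real.exp (-1) < 1 := by simp
  calc ∑ J : Finset (Fin n), Real.exp (-ell n J.card)
      = ∑ k ∈ range (n + 1), (n.choose k : ℝ) * Real.exp (-ell n k) := by
        rw [← powerset_univ, sum_powerset_apply_card (fun k => Real.exp (-ell n k))]
        simp
    _ ≤ ∑ k ∈ range (n + 1), Real.exp (-1) ^ k := by
        refine sum_le_sum fun k hk => ?_
        refine (choose_mul_exp_neg_ell_le (Nat.lt_succ_iff.mp (mem_range.mp hk))).trans_eq ?_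
        rw [← Real.exp_nat_mul]; simp
    _ ≤ ∑' k : ℕ, Real.exp (-1) ^ k :=
        (summable_geometric_of_lt_one (Real.exp_pos _).le hlt).sum_le_tsum _
          fun _ _ => by positivity
    _ = 1 / (1 - Real.exp (-1)) := by
        rw [tsum_geometric_of_lt_one (Real.exp_pos _).le hlt, one_div]

/-- Deterministic comparison of a penalized selection `J` for the data `x` with the penalized
oracle `S` for `θ`. -/
theorem penalized_selection_ell_le {n : ℕ} {σ K A : ℝ} (hσ : 0 < σ) (hA : 0 ≤ A)
    {x θ : Fin n → ℝ} {J S : Finset (Fin n)}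
    (hJ : (∑ i ∈ Jᶜ, x i ^ 2) + K * σ ^ 2 * ell n J.card
      ≤ (∑ i ∈ Sᶜ, x i ^ 2) + K * σ ^ 2 * ell n S.card)
    (hS : (∑ i ∈ Sᶜ, θ i ^ 2) + A * σ ^ 2 * ell n S.card
      ≤ (∑ i ∈ (S ∪ J)ᶜ, θ i ^ 2) + A * σ ^ 2 * ell n (S ∪ J).card) :
    (K - 2 * A) * ell n J.card
      ≤ K * ell n S.card + 2 * ∑ i ∈ J, ((x i - θ i) / σ) ^ 2 := by
  have hx : ∑ i ∈ Sᶜ, x i ^ 2 ≤ ∑ i ∈ Jᶜ, x i ^ 2 + ∑ i ∈ J \ S, x i ^ 2 := by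
    rw [← sum_union (disjoint_left.mpr fun i => by simp +contextual)]
    refine sum_le_sum_of_subset_of_nonneg (fun i => ?_) fun _ _ _ => sq_nonneg _
    simp only [mem_compl, mem_union, mem_sdiff]
    tauto
  have hθ : ∑ i ∈ Sᶜ, θ i ^ 2 = ∑ i ∈ (S ∪ J)ᶜ, θ i ^ 2 + ∑ i ∈ J \ S, θ i ^ 2 := by
    rw [← sum_union (disjoint_left.mpr fun i => by simp +contextual)]
    congr 1
    ext i
    simp only [mem_compl, mem_union, mem_sdiff]
    tauto
  have hsplit : ∑ i ∈ J \ S, x i ^ 2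
      ≤ 2 * ∑ i ∈ J \ S, θ i ^ 2 + 2 * σ ^ 2 * ∑ i ∈ J \ S, ((x i - θ i) / σ) ^ 2 := by
    rw [mul_sum, mul_sum, ← sum_add_distrib]
    refine sum_le_sum fun i _ => ?_
    have : 2 * σ ^ 2 * ((x i - θ i) / σ) ^ 2 = 2 * (x i - θ i) ^ 2 := by field_simp
    rw [this]
    nlinarith [sq_nonneg (x i - 2 * θ i)]
  have hnoise : ∑ i ∈ J \ S, ((x i - θ i) / σ) ^ 2 ≤ ∑ i ∈ J, ((x i - θ i) / σ) ^ 2 :=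
    sum_le_sum_of_subset_of_nonneg sdiff_subset fun _ _ _ => sq_nonneg _
  have hσ2 : 0 < σ ^ 2 := by positivity
  have hunion := mul_le_mul_of_nonneg_left (ell_card_union_le S J) (mul_nonneg hA hσ2.le)
  have hnoise' := mul_le_mul_of_nonneg_left hnoise hσ2.le
  refine le_of_mul_le_mul_left ?_ hσ2
  linarith

theorem stmt_0 (Cξ Hξ αξ : ℝ) (hCξ : 0 < Cξ) (hHξ : 0 < Hξ) (hαξ : 0 < αξ) (A₀ : ℝ) (hA₀ : 0 < A₀) :
    ∃ K₀ M₀ α₀ : ℝ, 0 < K₀ ∧ 0 < M₀ ∧ 0 < α₀ ∧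
      ∀ (n : ℕ) (σ : ℝ), 0 < σ →
        ∀ P : (Fin n → ℝ) → Measure (Fin n → ℝ),
          (∀ θ, IsProbabilityMeasure (P θ)) →
          (∀ (θ : Fin n → ℝ) (I : Finset (Fin n)) (M : ℝ), 0 ≤ M →
            P θ {x | Cξ * I.card + M ≤ ∑ i ∈ I, ((x i - θ i) / σ) ^ 2}
              ≤ ENNReal.ofReal (Hξ * Real.exp (-αξ * M))) →
          ∀ Itil : (Fin n → ℝ) → Finset (Fin n),
            (∀ (x : Fin n → ℝ) (I : Finset (Fin n)),
              (∑ i ∈ (Itil x)ᶜ, x i ^ 2) + K₀ * σ ^ 2 * ell n (Itil x).card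
                ≤ (∑ i ∈ Iᶜ, x i ^ 2) + K₀ * σ ^ 2 * ell n I.card) →
            ∀ (θ : Fin n → ℝ) (Istar : Finset (Fin n)),
              (∀ I : Finset (Fin n),
                (∑ i ∈ Istarᶜ, θ i ^ 2) + A₀ * σ ^ 2 * ell n Istar.card
                  ≤ (∑ i ∈ Iᶜ, θ i ^ 2) + A₀ * σ ^ 2 * ell n I.card) →
              ∀ M : ℝ, 0 ≤ M →
                P θ {x | M₀ * ell n Istar.card + M ≤ ell n (Itil x).card}
                  ≤ ENNReal.ofReal (Hξ / (1 - Real.exp (-1)) * Real.exp (-α₀ * M)) := by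
  refine ⟨4 * (A₀ + Cξ + 2 / αξ), 2, 1, by positivity, by norm_num, one_pos, ?_⟩
  intro n σ hσ P _ hP Itil hItil θ S hS M _
  have hle : ∀ I : Finset (Fin n), I.card ≤ n := fun I => by simpa using card_le_univ I
  set F : Finset (Finset (Fin n)) := univ.filter fun J => M ≤ ell n J.card with hF
  have hsub : {x | 2 * ell n S.card + M ≤ ell n (Itil x).card} ⊆
      ⋃ J ∈ F, {x | Cξ * J.card + 2 / αξ * ell n J.card
        ≤ ∑ i ∈ J, ((x i - θ i) / σ) ^ 2} := by
    intro x hx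
    rw [Set.mem_ofPred_eq] at hx
    have hS0 := ell_nonneg (hle S)
    have hcard := two_mul_le_ell (hle (Itil x))
    have hkey := penalized_selection_ell_le hσ hA₀.le (hItil x S) (hS (S ∪ Itil x))
    have hMS : 2 * ell n S.card ≤ ell n (Itil x).card := by linarith
    have hpen := mul_le_mul_of_nonneg_left hMS
      (by positivity : 0 ≤ 2 * (A₀ + Cξ + 2 / αξ))
    have hcard' : Cξ * (Itil x).card ≤ Cξ * ell n (Itil x).card := by
      gcongr
      linarith [Nat.cast_nonneg (α := ℝ) (Itil x).card]
    simp only [Set.mem_iUnion, Set.mem_ofPred_eq]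
    refine ⟨Itil x, by simp only [hF, mem_filter, mem_univ, true_and]; linarith, ?_⟩
    linarith
  have hterm : ∀ J ∈ F, P θ {x | Cξ * J.card + 2 / αξ * ell n J.card
      ≤ ∑ i ∈ J, ((x i - θ i) / σ) ^ 2}
        ≤ ENNReal.ofReal (Hξ * Real.exp (-M) * Real.exp (-ell n J.card)) := by
    intro J hJ
    have hMJ : M ≤ ell n J.card := by simpa [hF] using hJ
    refine (hP θ J _ (mul_nonneg (by positivity) (ell_nonneg (hle J)))).trans
      (ENNReal.ofReal_le_ofReal ?_)
    rw [mul_assoc, ← Real.exp_add]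
    have : -αξ * (2 / αξ * ell n J.card) = -2 * ell n J.card := by field_simp
    rw [this]
    gcongr
    linarith
  calc P θ {x | 2 * ell n S.card + M ≤ ell n (Itil x).card}
      ≤ ∑ J ∈ F, P θ {x | Cξ * J.card + 2 / αξ * ell n J.card
          ≤ ∑ i ∈ J, ((x i - θ i) / σ) ^ 2} :=
        (measure_mono hsub).trans (measure_biUnion_finset_le _ _)
    _ ≤ ∑ J ∈ F, ENNReal.ofReal (Hξ * Real.exp (-M) * Real.exp (-ell n J.card)) :=
        sum_le_sum hterm
    _ = ENNReal.ofReal (∑ J ∈ F, Hξ * Real.exp (-M) * Real.exp (-ell n J.card)) :=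
        (ENNReal.ofReal_sum_of_nonneg fun _ _ => by positivity).symm
    _ ≤ ENNReal.ofReal (Hξ / (1 - Real.exp (-1)) * Real.exp (-1 * M)) := by
        refine ENNReal.ofReal_le_ofReal ?_
        rw [← mul_sum]
        have hsum : ∑ J ∈ F, Real.exp (-ell n J.card) ≤ 1 / (1 - Real.exp (-1)) :=
          (sum_le_sum_of_subset_of_nonneg (filter_subset _ _)
            fun _ _ _ => (Real.exp_pos _).le).trans (sum_exp_neg_ell_card_le n)
        calc Hξ * Real.exp (-M) * ∑ J ∈ F, Real.exp (-ell n J.card)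
            ≤ Hξ * Real.exp (-M) * (1 / (1 - Real.exp (-1))) := by gcongr
          _ = Hξ / (1 - Real.exp (-1)) * Real.exp (-1 * M) := by
            rw [neg_one_mul]; ring
end

section
/- Assume Condition (A1) and the standing assumptions. Then there exist constants H₁, α₂ > 0, depending only on the constants of (A1) and of the standing assumptions, such that for every θ ∈ ℝⁿ the false positive rate of the selector satisfies E_θ[ |Î(K)∖I^*| / (n − |I^*|) ] ≤ H₁·(n/(|I^*| ∨ 1))^{−α₂} (with the convention 0/0 := 0 when |I^*| = n). -/
open MeasureTheory Finset
open scoped Classical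

/-- The selector `Î(K)`: empty if the preselector `Ĩ(K)` is empty, otherwise all coordinates
with `X_i² ≥ K σ² log(q n / |Ĩ(K)|)`, where `q = e²`. -/
noncomputable def ihat {n : ℕ} (K σ : ℝ) (Itil : (Fin n → ℝ) → Finset (Fin n))
    (x : Fin n → ℝ) : Finset (Fin n) :=
  if Itil x = ∅ then ∅
  else Finset.univ.filter fun i =>
    K * σ ^ 2 * Real.log (Real.exp 2 * (n : ℝ) / (Itil x).card) ≤ (x i) ^ 2

theorem ell_succ_sub_le (n k : ℕ) (hn : 0 < n) :
    ell n (k + 1) - ell n k ≤ Real.log (Real.exp 2 * n / (max k 1 : ℕ)) := by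
  have hq : 0 < Real.exp 2 * (n : ℝ) := by positivity
  rcases Nat.eq_zero_or_pos k with rfl | hk
  · simp [ell]
  · have hk' : (0 : ℝ) < k := by exact_mod_cast hk
    have hmono : Real.log (Real.exp 2 * n / ((k + 1 : ℕ) : ℝ))
        ≤ Real.log (Real.exp 2 * n / k) := by
      apply Real.log_le_log (by positivity)
      gcongr
      simp
    rw [max_eq_left hk]
    unfold ell
    push_cast at hmono ⊢
    nlinarith

theorem two_le_log_ratio (n k : ℕ) (hn : 0 < n) (hk : k ≤ n) :
    2 ≤ Real.log (Real.exp 2 * n / (max k 1 : ℕ)) := by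
  have hpos : (0 : ℝ) < (max k 1 : ℕ) := by
    exact_mod_cast lt_of_lt_of_le one_pos (le_max_right k 1)
  have hle : ((max k 1 : ℕ) : ℝ) ≤ n := by exact_mod_cast max_le hk hn
  rw [Real.le_log_iff_exp_le (by positivity), le_div_iff₀ hpos]
  gcongr

/-- A coordinate outside a minimizer of the penalized residual has a small signal. -/
theorem sq_le_of_notMem_minimizer {n : ℕ} (A σ : ℝ) (hA : 0 < A) (θ : Fin n → ℝ)
    (J : Finset (Fin n))
    (hJ : ∀ I : Finset (Fin n), (∑ i ∈ Jᶜ, θ i ^ 2) + A * σ ^ 2 * ell n J.card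
      ≤ (∑ i ∈ Iᶜ, θ i ^ 2) + A * σ ^ 2 * ell n I.card)
    (i : Fin n) (hi : i ∉ J) :
    θ i ^ 2 ≤ A * σ ^ 2 * Real.log (Real.exp 2 * n / (max J.card 1 : ℕ)) := by
  have hmin := hJ (insert i J)
  rw [Finset.card_insert_of_notMem hi, Finset.compl_insert] at hmin
  have hsum := Finset.add_sum_erase Jᶜ (fun j => θ j ^ 2) (Finset.mem_compl.mpr hi)
  have hell := mul_le_mul_of_nonneg_left (ell_succ_sub_le n J.card i.pos)
    (by positivity : 0 ≤ A * σ ^ 2)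
  linarith

/-- If the preselector has cardinality `m < M₁ k + L`, the threshold at `m` is comparable to the
threshold `L` at `max k 1`, up to an arbitrarily small relative loss. -/
theorem log_threshold_ge (n k m : ℕ) (hn : 0 < n) (hk : k ≤ n) (hm : 0 < m) (M₁ ε : ℝ)
    (hM₁ : 1 < M₁) (hε : 0 < ε)
    (hmk : (m : ℝ) < M₁ * k + Real.log (Real.exp 2 * n / (max k 1 : ℕ))) :
    (1 - ε) * Real.log (Real.exp 2 * n / (max k 1 : ℕ)) - (ε * M₁ - 1 - Real.log ε)
      ≤ Real.log (Real.exp 2 * n / m) := by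
  have hL := two_le_log_ratio n k hn hk
  set L := Real.log (Real.exp 2 * n / (max k 1 : ℕ)) with hLdef
  have hk1 : (1 : ℝ) ≤ (max k 1 : ℕ) := by exact_mod_cast le_max_right k 1
  have hkk : (k : ℝ) ≤ (max k 1 : ℕ) := by exact_mod_cast le_max_left k 1
  have hm' : (0 : ℝ) < m := by exact_mod_cast hm
  have hn' : (0 : ℝ) < n := by exact_mod_cast hn
  have hmle : (m : ℝ) ≤ (max k 1 : ℕ) * (M₁ + L) := by nlinarith
  have hlogm : Real.log m ≤ Real.log (max k 1 : ℕ) + Real.log (M₁ + L) := by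
    rw [← Real.log_mul (by positivity) (by positivity)]
    exact Real.log_le_log hm' hmle
  have hloglin : Real.log ε + Real.log (M₁ + L) ≤ ε * (M₁ + L) - 1 := by
    rw [← Real.log_mul (by positivity) (by positivity)]
    exact Real.log_le_sub_one_of_pos (by positivity)
  have hLeq : L = Real.log (Real.exp 2 * n) - Real.log (max k 1 : ℕ) :=
    Real.log_div (by positivity) (by positivity)
  rw [Real.log_div (by positivity) (by positivity)]
  linarith

/-- A selected coordinate outside the active set forces a large noise coordinate. -/
theorem noise_ge_of_mem_ihat {n : ℕ} (Cξ K A₀ M₁ ε σ : ℝ) (hCξ : 0 < Cξ) (hK : 0 < K)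
    (hA₀ : 0 < A₀) (hM₁ : 1 < M₁) (hε : 0 < ε) (hεK : K * ε = K / 2 - A₀ - Cξ) (hσ : 0 < σ)
    (θ x : Fin n → ℝ) (Itil : (Fin n → ℝ) → Finset (Fin n)) (J : Finset (Fin n))
    (hJ : ∀ I : Finset (Fin n), (∑ i ∈ Jᶜ, θ i ^ 2) + A₀ * σ ^ 2 * ell n J.card
      ≤ (∑ i ∈ Iᶜ, θ i ^ 2) + A₀ * σ ^ 2 * ell n I.card)
    (hx : ((Itil x).card : ℝ) < M₁ * J.card + Real.log (Real.exp 2 * n / (max J.card 1 : ℕ)))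
    (i : Fin n) (hi : i ∈ ihat K σ Itil x \ J) :
    Cξ + (K * ε / 2 * Real.log (Real.exp 2 * n / (max J.card 1 : ℕ))
      - K / 2 * |ε * M₁ - 1 - Real.log ε|) ≤ ((x i - θ i) / σ) ^ 2 := by
  obtain ⟨hsel, hiJ⟩ := Finset.mem_sdiff.mp hi
  have hJn : J.card ≤ n := by simpa using Finset.card_le_univ J
  unfold ihat at hsel
  split_ifs at hsel with hempty
  · simp at hsel
  have hthr := (Finset.mem_filter.mp hsel).2
  have hm : 0 < (Itil x).card := Finset.card_pos.mpr (Finset.nonempty_iff_ne_empty.mpr hempty)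
  have hlog := log_threshold_ge n J.card _ i.pos hJn hm M₁ ε hM₁ hε hx
  have hθ := sq_le_of_notMem_minimizer A₀ σ hA₀ θ J hJ i hiJ
  have hL := two_le_log_ratio n J.card i.pos hJn
  set L := Real.log (Real.exp 2 * n / (max J.card 1 : ℕ))
  set T := Real.log (Real.exp 2 * (n : ℝ) / (Itil x).card)
  have habs := le_abs_self (ε * M₁ - 1 - Real.log ε)
  set D := ε * M₁ - 1 - Real.log ε
  have hsq : x i ^ 2 ≤ 2 * θ i ^ 2 + 2 * (x i - θ i) ^ 2 := by
    nlinarith [sq_nonneg (x i - 2 * θ i)]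
  have hσ2 : 0 < σ ^ 2 := by positivity
  have hlow : K / 2 * T - A₀ * L ≤ ((x i - θ i) / σ) ^ 2 := by
    rw [div_pow, le_div_iff₀ hσ2]
    nlinarith
  have hT : K / 2 * ((1 - ε) * L - |D|) ≤ K / 2 * T := by
    apply mul_le_mul_of_nonneg_left _ (by positivity)
    linarith
  have hexp : K / 2 * ((1 - ε) * L - |D|) - A₀ * L
      = (K / 2 - A₀ - K * ε) * L + K * ε / 2 * L - K / 2 * |D| := by ring
  have hcoef : K / 2 - A₀ - K * ε = Cξ := by linarith
  rw [hcoef] at hexp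
  nlinarith

/-- Tail bound for one coordinate of the noise, extended to all real deviations. -/
theorem noise_tail_le {n : ℕ} (Cξ Hξ αξ σ : ℝ) (hαξ : 0 < αξ)
    (μ : Measure (Fin n → ℝ)) [IsProbabilityMeasure μ] (θ : Fin n → ℝ)
    (hA1 : ∀ (I : Finset (Fin n)) (M : ℝ), 0 ≤ M →
      μ {x | Cξ * I.card + M ≤ ∑ i ∈ I, ((x i - θ i) / σ) ^ 2}
        ≤ ENNReal.ofReal (Hξ * Real.exp (-αξ * M)))
    (i : Fin n) (M : ℝ) :
    μ {x | Cξ + M ≤ ((x i - θ i) / σ) ^ 2}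
      ≤ ENNReal.ofReal (max Hξ 1 * Real.exp (-αξ * M)) := by
  rcases le_or_gt 0 M with hM | hM
  · have h := hA1 {i} M hM
    simp only [Finset.card_singleton, Nat.cast_one, mul_one, Finset.sum_singleton] at h
    refine h.trans (ENNReal.ofReal_le_ofReal ?_)
    gcongr
    exact le_max_left _ _
  · refine prob_le_one.trans ?_
    rw [← ENNReal.ofReal_one]
    apply ENNReal.ofReal_le_ofReal
    have hexp : 1 ≤ Real.exp (-αξ * M) := Real.one_le_exp (by nlinarith)
    nlinarith [le_max_right Hξ 1]

/-- The expected proportion of `S x` inside `T` is at most the probability of a bad event plus a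
uniform bound on the probabilities of events containing `i ∈ S x` off the bad event. -/
theorem lintegral_card_div_le {Ω ι : Type*} [MeasurableSpace Ω] (μ : Measure Ω)
    (S : Ω → Finset ι) (T : Finset ι) (hST : ∀ x, S x ⊆ T) (B : Set Ω) (E : ι → Set Ω)
    (hE : ∀ i, MeasurableSet (E i)) (hcover : ∀ x, x ∉ B → ∀ i ∈ S x, x ∈ E i)
    (p : ENNReal) (hp : ∀ i ∈ T, μ (E i) ≤ p) :
    ∫⁻ x, ENNReal.ofReal ((S x).card / T.card : ℝ) ∂μ ≤ μ B + p := by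
  set c : ENNReal := ENNReal.ofReal (1 / T.card) with hc
  have hcard : ∀ s : Finset ι, ENNReal.ofReal (s.card / T.card : ℝ) = ∑ _i ∈ s, c := by
    intro s
    rw [Finset.sum_const, nsmul_eq_mul, hc, ← ENNReal.ofReal_natCast,
      ← ENNReal.ofReal_mul (by positivity)]
    congr 1
    ring
  have hT : ∑ _i ∈ T, c ≤ 1 := by
    rw [← hcard, ← ENNReal.ofReal_one]
    exact ENNReal.ofReal_le_ofReal (div_self_le_one _)
  have hbound : ∀ x, ENNReal.ofReal ((S x).card / T.card : ℝ)
      ≤ (toMeasurable μ B).indicator 1 x + ∑ i ∈ T, c * (E i).indicator 1 x := by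
    intro x
    rw [hcard]
    by_cases hx : x ∈ B
    · rw [Set.indicator_of_mem (subset_toMeasurable μ B hx)]
      exact ((Finset.sum_le_sum_of_subset (hST x)).trans hT).trans le_self_add
    · refine le_trans ?_ le_add_self
      refine le_trans (Finset.sum_le_sum fun i hi => ?_) (Finset.sum_le_sum_of_subset (hST x))
      rw [Set.indicator_of_mem (hcover x hx i hi)]
      simp
  refine (lintegral_mono hbound).trans ?_
  rw [lintegral_add_left (measurable_one.indicator (measurableSet_toMeasurable μ B)),
    lintegral_indicator_one (measurableSet_toMeasurable μ B), measure_toMeasurable,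
    lintegral_finsetSum _ fun i _ => (measurable_one.indicator (hE i)).const_mul c]
  gcongr
  calc ∑ i ∈ T, ∫⁻ x, c * (E i).indicator 1 x ∂μ
      = ∑ i ∈ T, c * μ (E i) := by
        refine Finset.sum_congr rfl fun i _ => ?_
        rw [lintegral_const_mul _ (measurable_one.indicator (hE i)),
          lintegral_indicator_one (hE i)]
    _ ≤ ∑ i ∈ T, c * p := Finset.sum_le_sum fun i hi => by gcongr; exact hp i hi
    _ = (∑ i ∈ T, c) * p := (Finset.sum_mul _ _ _).symm
    _ ≤ 1 * p := by gcongr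
    _ = p := one_mul p

theorem stmt_4 (Cξ Hξ αξ : ℝ) (hCξ : 0 < Cξ) (hHξ : 0 < Hξ) (hαξ : 0 < αξ)
    (K A₀ A₁ α₀ α₁' M₁ δ : ℝ)
    (hK : 0 < K) (hA₀ : 0 < A₀) (hA₁ : 0 < A₁) (hα₀ : 0 < α₀) (hα₁' : 0 < α₁')
    (hM₁ : 1 < M₁) (hδ : 0 < δ) (hδ1 : δ < 1) (hA01 : A₀ ≤ A₁)
    (hKC : A₀ + Cξ < K / 2)
    (hA1big : K / 2 + αξ⁻¹ * ((Cξ * αξ + 2) / 2 + 1) < A₁ / 6) :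
    ∃ H₁ α₂ : ℝ, 0 < H₁ ∧ 0 < α₂ ∧
      ∀ (n : ℕ) (σ : ℝ), 0 < σ →
        ∀ P : (Fin n → ℝ) → Measure (Fin n → ℝ),
          (∀ θ, IsProbabilityMeasure (P θ)) →
          (∀ (θ : Fin n → ℝ) (I : Finset (Fin n)) (M : ℝ), 0 ≤ M →
              P θ {x | Cξ * I.card + M ≤ ∑ i ∈ I, ((x i - θ i) / σ) ^ 2}
                ≤ ENNReal.ofReal (Hξ * Real.exp (-αξ * M))) →
          ∀ Itil : (Fin n → ℝ) → Finset (Fin n),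
            (∀ (x : Fin n → ℝ) (I : Finset (Fin n)),
                (∑ i ∈ (Itil x)ᶜ, x i ^ 2) + K * σ ^ 2 * ell n (Itil x).card
                  ≤ (∑ i ∈ Iᶜ, x i ^ 2) + K * σ ^ 2 * ell n I.card) →
            ∀ Istar : ℝ → (Fin n → ℝ) → Finset (Fin n),
              (∀ (A : ℝ) (θ : Fin n → ℝ), 0 < A → ∀ I : Finset (Fin n),
                  (∑ i ∈ (Istar A θ)ᶜ, θ i ^ 2) + A * σ ^ 2 * ell n (Istar A θ).card
                    ≤ (∑ i ∈ Iᶜ, θ i ^ 2) + A * σ ^ 2 * ell n I.card) →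
              (∀ (θ : Fin n → ℝ) (M : ℝ), 0 ≤ M →
                  P θ {x | M₁ * (Istar A₀ θ).card + M ≤ ((Itil x).card : ℝ)}
                    ≤ ENNReal.ofReal (Hξ / (1 - Real.exp (-1)) *
                        Real.exp (-α₀ * ell n (Istar A₀ θ).card - α₀ * M / 2))) →
              (∀ θ : Fin n → ℝ,
                  P θ {x | ((Itil x).card : ℝ) ≤ δ * (Istar A₁ θ).card}
                    ≤ ENNReal.ofReal (Hξ / (1 - Real.exp (-1)) *
                        Real.exp (-α₁' * ell n (Istar A₁ θ).card))) →
              ∀ θ : Fin n → ℝ,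
                (∫⁻ x, ENNReal.ofReal
                    (((ihat K σ Itil x \ Istar A₀ θ).card : ℝ) /
                      ((n : ℝ) - (Istar A₀ θ).card)) ∂(P θ))
                  ≤ ENNReal.ofReal
                      (H₁ * ((n : ℝ) / (↑(max (Istar A₀ θ).card 1))) ^ (-α₂)) := by
  set H₀ := Hξ / (1 - Real.exp (-1))
  have hH₀ : 0 < H₀ := by
    have : Real.exp (-1) < 1 := by simp
    exact div_pos hHξ (by linarith)
  set ε := (K / 2 - A₀ - Cξ) / K with hεdef
  have hε : 0 < ε := div_pos (by linarith) hK
  have hεK : K * ε = K / 2 - A₀ - Cξ := by rw [hεdef]; field_simp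
  set D := K / 2 * |ε * M₁ - 1 - Real.log ε|
  set H' := max Hξ 1 * Real.exp (αξ * D) with hH'def
  have hH' : 0 < H' := by positivity
  set α₂ := min (α₀ / 2) (αξ * (K * ε / 2))
  have hα₂ : 0 < α₂ := lt_min (by positivity) (by positivity)
  refine ⟨H₀ + H', α₂, by positivity, hα₂, ?_⟩
  intro n σ hσ P hP hA1 Itil _ Istar hIstar hover _ θ
  have := hP θ
  rcases Nat.eq_zero_or_pos n with rfl | hn
  · simp [Finset.eq_empty_of_isEmpty]
  set J := Istar A₀ θ
  have hJn : J.card ≤ n := by simpa using Finset.card_le_univ J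
  have hJmin := hIstar A₀ θ hA₀
  have hL := two_le_log_ratio n J.card hn hJn
  set L := Real.log (Real.exp 2 * n / (max J.card 1 : ℕ)) with hLdef
  have hk1 : (0 : ℝ) < (max J.card 1 : ℕ) := by
    exact_mod_cast lt_of_lt_of_le one_pos (le_max_right J.card 1)
  have hn' : (0 : ℝ) < n := by exact_mod_cast hn
  have hcompl : (n : ℝ) - J.card = (Jᶜ.card : ℕ) := by
    rw [Finset.card_compl, Fintype.card_fin, Nat.cast_sub hJn]
  have hell : 0 ≤ ell n J.card := by
    rcases Nat.eq_zero_or_pos J.card with h0 | hpos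
    · simp [ell, h0]
    · rw [hLdef, max_eq_left hpos] at hL
      unfold ell
      exact mul_nonneg (Nat.cast_nonneg _) (by linarith)
  have hL₂ : Real.exp (-α₂ * L) ≤ ((n : ℝ) / (max J.card 1 : ℕ)) ^ (-α₂) := by
    rw [mul_comm, ← Real.rpow_def_of_pos (by positivity)]
    apply Real.rpow_le_rpow_of_nonpos (by positivity) _ (by linarith)
    gcongr
    nlinarith [Real.add_one_le_exp (2 : ℝ)]
  have hmain := lintegral_card_div_le (P θ) (fun x => ihat K σ Itil x \ J) Jᶜ
    (fun x i hi => Finset.mem_compl.mpr (Finset.mem_sdiff.mp hi).2)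
    {x | M₁ * J.card + L ≤ ((Itil x).card : ℝ)}
    (fun i => {x | Cξ + (K * ε / 2 * L - D) ≤ ((x i - θ i) / σ) ^ 2})
    (fun i => measurableSet_le measurable_const (by fun_prop))
    (fun x hx i hi => noise_ge_of_mem_ihat Cξ K A₀ M₁ ε σ hCξ hK hA₀ hM₁ hε hεK hσ θ x Itil J
      hJmin (not_le.mp hx) i hi)
    _ (fun i _ => noise_tail_le Cξ Hξ αξ σ hαξ (P θ) θ (hA1 θ) i _)
  rw [← hcompl] at hmain
  refine hmain.trans ((add_le_add_left (hover θ L (by linarith)) _).trans ?_)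
  rw [← ENNReal.ofReal_add (by positivity) (by positivity)]
  apply ENNReal.ofReal_le_ofReal
  have hbad : Real.exp (-α₀ * ell n J.card - α₀ * L / 2) ≤ Real.exp (-α₂ * L) := by
    apply Real.exp_le_exp.mpr
    have h₁ : α₂ * L ≤ α₀ / 2 * L := by gcongr; exact min_le_left _ _
    nlinarith [mul_nonneg hα₀.le hell]
  have hnoise : Real.exp (-αξ * (K * ε / 2 * L - D))
      ≤ Real.exp (αξ * D) * Real.exp (-α₂ * L) := by
    rw [← Real.exp_add]
    apply Real.exp_le_exp.mpr
    have h₁ : α₂ * L ≤ αξ * (K * ε / 2) * L := by gcongr; exact min_le_right _ _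
    nlinarith
  calc H₀ * Real.exp (-α₀ * ell n J.card - α₀ * L / 2)
        + max Hξ 1 * Real.exp (-αξ * (K * ε / 2 * L - D))
      ≤ H₀ * Real.exp (-α₂ * L) + max Hξ 1 * (Real.exp (αξ * D) * Real.exp (-α₂ * L)) := by
        gcongr
    _ = (H₀ + H') * Real.exp (-α₂ * L) := by rw [hH'def]; ring
    _ ≤ _ := by gcongr
end

section
/- Assume Condition (A1) and the standing assumptions. Then there exist constants H₂, α₃ > 0, depending only on the constants of (A1) and of the standing assumptions, such that for every θ ∈ ℝⁿ the non-discovery rate of the selector satisfies E_θ[ |I_*∖Î(K)| / |I_*| ] ≤ H₂·(n/(|I_*| ∨ 1))^{−α₃} (with the convention 0/0 := 0 when I_* = ∅). -/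
open MeasureTheory Finset
open scoped Classical

/-- The increments of `ell n` are at least `log (e² n / k) - 1`. -/
lemma log_sub_one_le_ell_sub_ell_pred {n k : ℕ} (hk : 1 ≤ k) (hkn : k ≤ n) :
    Real.log (Real.exp 2 * n / k) - 1 ≤ ell n k - ell n (k - 1) := by
  obtain ⟨j, rfl⟩ : ∃ j, k = j + 1 := ⟨k - 1, by omega⟩
  have hn : (0 : ℝ) < n := by exact_mod_cast (by omega : 0 < n)
  rcases Nat.eq_zero_or_pos j with rfl | hj
  · simp [ell]
  have hj' : (0 : ℝ) < j := by exact_mod_cast hj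
  have hsplit : Real.log (Real.exp 2 * n / j)
      = Real.log (Real.exp 2 * n / ((j + 1 : ℕ) : ℝ)) + Real.log ((j + 1) / j) := by
    rw [← Real.log_mul (by positivity) (by positivity)]
    congr 1
    push_cast
    field_simp
  have hlog : Real.log ((j + 1) / j) ≤ 1 / j := by
    refine (Real.log_le_sub_one_of_pos (by positivity)).trans (le_of_eq ?_)
    field_simp
    ring
  have hmul : (j : ℝ) * Real.log ((j + 1) / j) ≤ 1 := by
    calc (j : ℝ) * Real.log ((j + 1) / j) ≤ j * (1 / j) := by gcongr
      _ = 1 := by field_simp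
  simp only [ell, Nat.add_sub_cancel]
  rw [hsplit]
  push_cast at hmul ⊢
  linarith

/-- Every coordinate in a penalized minimizer `I` is at least as large as the penalty it costs. -/
lemma mul_log_sub_one_le_sq_of_mem_minimizer {n : ℕ} {c : ℝ} (hc : 0 ≤ c) (θ : Fin n → ℝ)
    (I : Finset (Fin n))
    (hmin : ∀ J : Finset (Fin n),
      (∑ i ∈ Iᶜ, θ i ^ 2) + c * ell n I.card ≤ (∑ i ∈ Jᶜ, θ i ^ 2) + c * ell n J.card)
    {i : Fin n} (hi : i ∈ I) :
    c * (Real.log (Real.exp 2 * n / I.card) - 1) ≤ θ i ^ 2 := by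
  have hremove := hmin (I.erase i)
  have hsum : ∑ j ∈ (I.erase i)ᶜ, θ j ^ 2 = θ i ^ 2 + ∑ j ∈ Iᶜ, θ j ^ 2 := by
    rw [Finset.compl_erase, Finset.sum_insert (by simpa using hi)]
  rw [hsum, Finset.card_erase_of_mem hi] at hremove
  have hpos : 1 ≤ I.card := Finset.card_pos.mpr ⟨i, hi⟩
  have hcard : I.card ≤ n := by simpa using Finset.card_le_univ I
  have := mul_le_mul_of_nonneg_left (log_sub_one_le_ell_sub_ell_pred hpos hcard) hc
  linarith

/-- A Young-type splitting of the signal into observation and noise. -/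
lemma sq_le_observation_add_noise {σ : ℝ} (hσ : 0 < σ) (x t : ℝ) :
    t ^ 2 ≤ 3 / 2 * x ^ 2 + 3 * (σ ^ 2 * ((x - t) / σ) ^ 2) := by
  have : σ ^ 2 * ((x - t) / σ) ^ 2 = (x - t) ^ 2 := by field_simp
  rw [this]
  nlinarith [sq_nonneg (3 * x - 2 * t)]

/-- A subexponential tail bound at level `C + m`, extended to negative `m`. -/
lemma measure_le_of_tail_bound {Ω : Type*} [MeasurableSpace Ω] (μ : Measure Ω)
    [IsProbabilityMeasure μ] (Z : Ω → ℝ) {C H α : ℝ} (hα : 0 < α)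
    (htail : ∀ M : ℝ, 0 ≤ M →
      μ {x | C + M ≤ Z x} ≤ ENNReal.ofReal (H * Real.exp (-α * M)))
    {t m : ℝ} (htm : C + m ≤ t) :
    μ {x | t ≤ Z x} ≤ ENNReal.ofReal (max H 1 * Real.exp (-α * m)) := by
  rcases le_total 0 m with hm | hm
  · calc μ {x | t ≤ Z x} ≤ μ {x | C + m ≤ Z x} :=
          measure_mono fun x hx => htm.trans hx
      _ ≤ ENNReal.ofReal (H * Real.exp (-α * m)) := htail m hm
      _ ≤ _ := by
          apply ENNReal.ofReal_le_ofReal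
          gcongr
          exact le_max_left _ _
  · refine prob_le_one.trans ?_
    rw [← ENNReal.ofReal_one]
    apply ENNReal.ofReal_le_ofReal
    exact one_le_mul_of_one_le_of_one_le (le_max_right _ _)
      (Real.one_le_exp (by nlinarith))

/-- The expected fraction of elements of `I` missed by a random set `J`, when outside an event `B`
every missed `i` lies in an event `S i` of small probability. -/
lemma lintegral_card_sdiff_div_le {Ω ι : Type*} [DecidableEq ι] [MeasurableSpace Ω] (μ : Measure Ω)
    (I : Finset ι) (J : Ω → Finset ι) (B : Set Ω) (S : ι → Set Ω)
    (hS : ∀ i, MeasurableSet (S i)) (hI : I.Nonempty)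
    (hmiss : ∀ x ∉ B, ∀ i ∈ I, i ∉ J x → x ∈ S i) {b s : ENNReal} (hB : μ B ≤ b)
    (hs : ∀ i ∈ I, μ (S i) ≤ s) :
    ∫⁻ x, ENNReal.ofReal (((I \ J x).card : ℝ) / (I.card : ℝ)) ∂μ ≤ b + s := by
  have hcard : (0 : ℝ) < I.card := by exact_mod_cast Finset.card_pos.mpr hI
  set c : ENNReal := ENNReal.ofReal (1 / (I.card : ℝ)) with hc
  have hcI : (I.card : ENNReal) * c = 1 := by
    rw [hc, ← ENNReal.ofReal_natCast, ← ENNReal.ofReal_mul hcard.le]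
    rw [mul_one_div_cancel hcard.ne', ENNReal.ofReal_one]
  have hpoint : ∀ x, ENNReal.ofReal (((I \ J x).card : ℝ) / (I.card : ℝ))
      ≤ B.indicator 1 x + ∑ i ∈ I, (S i).indicator (fun _ => c) x := by
    intro x
    by_cases hx : x ∈ B
    · refine le_trans ?_ le_self_add
      rw [Set.indicator_of_mem hx, Pi.one_apply, ← ENNReal.ofReal_one]
      apply ENNReal.ofReal_le_ofReal
      rw [div_le_one hcard]
      exact_mod_cast Finset.card_le_card Finset.sdiff_subset
    · refine le_trans ?_ le_add_self
      calc ENNReal.ofReal (((I \ J x).card : ℝ) / (I.card : ℝ))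
          = ∑ _i ∈ I \ J x, c := by
            rw [Finset.sum_const, nsmul_eq_mul, hc, ← ENNReal.ofReal_natCast,
              ← ENNReal.ofReal_mul (by positivity), mul_one_div]
        _ = ∑ i ∈ I \ J x, (S i).indicator (fun _ => c) x := by
            refine Finset.sum_congr rfl fun i hi => ?_
            rw [Finset.mem_sdiff] at hi
            rw [Set.indicator_of_mem (hmiss x hx i hi.1 hi.2)]
        _ ≤ ∑ i ∈ I, (S i).indicator (fun _ => c) x :=
            Finset.sum_le_sum_of_subset Finset.sdiff_subset
  calc ∫⁻ x, ENNReal.ofReal (((I \ J x).card : ℝ) / (I.card : ℝ)) ∂μ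
      ≤ ∫⁻ x, (B.indicator 1 x + ∑ i ∈ I, (S i).indicator (fun _ => c) x) ∂μ :=
        lintegral_mono hpoint
    _ = ∫⁻ x, B.indicator 1 x ∂μ + ∫⁻ x, ∑ i ∈ I, (S i).indicator (fun _ => c) x ∂μ :=
        lintegral_add_right _
          (Finset.measurable_sum _ fun i _ => measurable_const.indicator (hS i))
    _ = ∫⁻ x, B.indicator 1 x ∂μ + ∑ i ∈ I, c * μ (S i) := by
        rw [lintegral_finsetSum _ fun i _ => measurable_const.indicator (hS i)]
        simp only [lintegral_indicator_const (hS _)]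
    _ ≤ b + ∑ _i ∈ I, c * s := by
        gcongr with i hi
        · exact (lintegral_indicator_one_le B).trans hB
        · exact hs i hi
    _ = b + s := by
        rw [Finset.sum_const, nsmul_eq_mul, ← mul_assoc, hcI, one_mul]

/-- If the preselector is not too small, a missed coordinate with a large signal has a large
noise. -/
lemma noise_lower_bound_of_notMem_ihat {n : ℕ} {K σ A δ M : ℝ} (hσ : 0 < σ) (hK : 0 < K)
    (hA : 0 < A) (hδ : 0 < δ) (hAM : K / 2 + M ≤ A / 6)
    (Itil : (Fin n → ℝ) → Finset (Fin n)) (x θ : Fin n → ℝ) {k : ℕ} (hk : 1 ≤ k) (hkn : k ≤ n)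
    (hsize : δ * k < ((Itil x).card : ℝ)) {i : Fin n}
    (hθ : A * σ ^ 2 * (Real.log (Real.exp 2 * n / k) - 1) ≤ θ i ^ 2)
    (hi : i ∉ ihat K σ Itil x) :
    M * Real.log (Real.exp 2 * n / k) - K * -Real.log δ / 2 ≤ ((x i - θ i) / σ) ^ 2 := by
  have hk0 : (0 : ℝ) < k := by exact_mod_cast hk
  have hn0 : (0 : ℝ) < n := by exact_mod_cast hk.trans hkn
  have hc0 : (0 : ℝ) < (Itil x).card := lt_trans (by positivity) hsize
  have hne : Itil x ≠ ∅ := by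
    rintro h
    simp [h] at hc0
  simp only [ihat, hne, if_false, Finset.mem_filter, Finset.mem_univ, true_and, not_le] at hi
  set L := Real.log (Real.exp 2 * n / k) with hL
  have hL2 : 2 ≤ L := by
    rw [hL, Real.le_log_iff_exp_le (by positivity), le_div_iff₀ hk0]
    gcongr
  have hthr : Real.log (Real.exp 2 * n / (Itil x).card) ≤ L - Real.log δ := by
    rw [hL, ← Real.log_div (by positivity) hδ.ne']
    apply Real.log_le_log (by positivity)
    rw [div_div, mul_comm (k : ℝ) δ]
    gcongr
  have hyoung := sq_le_observation_add_noise hσ (x i) (θ i)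
  set z := ((x i - θ i) / σ) ^ 2
  have hσ2 : 0 < σ ^ 2 := by positivity
  have hobs : x i ^ 2 ≤ σ ^ 2 * (K * (L - Real.log δ)) := by
    refine hi.le.trans ?_
    rw [mul_comm K, mul_assoc]
    gcongr
  have hscaled : σ ^ 2 * (A * (L - 1)) ≤
      σ ^ 2 * (3 / 2 * (K * (L - Real.log δ)) + 3 * z) := by
    linarith
  have hreal := le_of_mul_le_mul_left hscaled hσ2
  nlinarith [mul_le_mul_of_nonneg_right hAM (by linarith : 0 ≤ L),
    mul_nonneg hA.le (by linarith : 0 ≤ L - 2)]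

theorem stmt_5 (Cξ Hξ αξ : ℝ) (hCξ : 0 < Cξ) (hHξ : 0 < Hξ) (hαξ : 0 < αξ)
    (K A₀ A₁ α₀ α₁' M₁ δ : ℝ)
    (hK : 0 < K) (hA₀ : 0 < A₀) (hA₁ : 0 < A₁) (hα₀ : 0 < α₀) (hα₁' : 0 < α₁')
    (hM₁ : 1 < M₁) (hδ : 0 < δ) (hδ1 : δ < 1) (hA01 : A₀ ≤ A₁)
    (hKC : A₀ + Cξ < K / 2)
    (hA1big : K / 2 + αξ⁻¹ * ((Cξ * αξ + 2) / 2 + 1) < A₁ / 6) :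
    ∃ H₂ α₃ : ℝ, 0 < H₂ ∧ 0 < α₃ ∧
      ∀ (n : ℕ) (σ : ℝ), 0 < σ →
        ∀ P : (Fin n → ℝ) → Measure (Fin n → ℝ),
          (∀ θ, IsProbabilityMeasure (P θ)) →
          (∀ (θ : Fin n → ℝ) (I : Finset (Fin n)) (M : ℝ), 0 ≤ M →
              P θ {x | Cξ * I.card + M ≤ ∑ i ∈ I, ((x i - θ i) / σ) ^ 2}
                ≤ ENNReal.ofReal (Hξ * Real.exp (-αξ * M))) →
          ∀ Itil : (Fin n → ℝ) → Finset (Fin n),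
            (∀ (x : Fin n → ℝ) (I : Finset (Fin n)),
                (∑ i ∈ (Itil x)ᶜ, x i ^ 2) + K * σ ^ 2 * ell n (Itil x).card
                  ≤ (∑ i ∈ Iᶜ, x i ^ 2) + K * σ ^ 2 * ell n I.card) →
            ∀ Istar : ℝ → (Fin n → ℝ) → Finset (Fin n),
              (∀ (A : ℝ) (θ : Fin n → ℝ), 0 < A → ∀ I : Finset (Fin n),
                  (∑ i ∈ (Istar A θ)ᶜ, θ i ^ 2) + A * σ ^ 2 * ell n (Istar A θ).card
                    ≤ (∑ i ∈ Iᶜ, θ i ^ 2) + A * σ ^ 2 * ell n I.card) →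
              (∀ (θ : Fin n → ℝ) (M : ℝ), 0 ≤ M →
                  P θ {x | M₁ * (Istar A₀ θ).card + M ≤ ((Itil x).card : ℝ)}
                    ≤ ENNReal.ofReal (Hξ / (1 - Real.exp (-1)) *
                        Real.exp (-α₀ * ell n (Istar A₀ θ).card - α₀ * M / 2))) →
              (∀ θ : Fin n → ℝ,
                  P θ {x | ((Itil x).card : ℝ) ≤ δ * (Istar A₁ θ).card}
                    ≤ ENNReal.ofReal (Hξ / (1 - Real.exp (-1)) *
                        Real.exp (-α₁' * ell n (Istar A₁ θ).card))) →
              ∀ θ : Fin n → ℝ,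
                (∫⁻ x, ENNReal.ofReal
                    (((Istar A₁ θ \ ihat K σ Itil x).card : ℝ) /
                      ((Istar A₁ θ).card : ℝ)) ∂(P θ))
                  ≤ ENNReal.ofReal
                      (H₂ * ((n : ℝ) / (↑(max (Istar A₁ θ).card 1))) ^ (-α₃)) := by
  have hH₀ : 0 < Hξ / (1 - Real.exp (-1)) := by
    apply div_pos hHξ
    have : Real.exp (-1) < 1 := by simp
    linarith
  have hH1 : 0 < max Hξ 1 := lt_max_of_lt_right one_pos
  refine ⟨Hξ / (1 - Real.exp (-1)) + max Hξ 1 * Real.exp (αξ * (K * -Real.log δ / 2)),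
    min 2 α₁', by positivity, by positivity, ?_⟩
  intro n σ hσ P hP hA1 Itil _ Istar hIstar _ hunder θ
  have := hP θ
  rcases Finset.eq_empty_or_nonempty (Istar A₁ θ) with hempty | hne
  · simp [hempty]
  have hmin := hIstar A₁ θ hA₁
  have hsmall := hunder θ
  set I := Istar A₁ θ
  have hk : 1 ≤ I.card := Finset.card_pos.mpr hne
  have hkn : I.card ≤ n := by simpa using Finset.card_le_univ I
  have hk0 : (0 : ℝ) < I.card := by exact_mod_cast hk
  have hn0 : (0 : ℝ) < n := by exact_mod_cast hk.trans hkn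
  rw [max_eq_left hk]
  have hr : 0 ≤ Real.log (n / I.card) :=
    Real.log_nonneg ((one_le_div hk0).mpr (by exact_mod_cast hkn))
  have hL : Real.log (Real.exp 2 * n / I.card) = 2 + Real.log (n / I.card) := by
    rw [mul_div_assoc, Real.log_mul (by positivity) (by positivity), Real.log_exp]
  rw [Real.rpow_def_of_pos (by positivity)]
  set r := Real.log (n / I.card)
  have hα : αξ⁻¹ * ((Cξ * αξ + 2) / 2 + 1) = Cξ / 2 + 2 / αξ := by
    field_simp
    ring
  rw [hα] at hA1big
  have hmin2 : min 2 α₁' ≤ 2 := min_le_left _ _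
  have hminα : min 2 α₁' ≤ α₁' := min_le_right _ _
  refine (lintegral_card_sdiff_div_le (P θ) I (ihat K σ Itil)
    {x | ((Itil x).card : ℝ) ≤ δ * I.card}
    (fun i => {x | (Cξ / 2 + 2 / αξ) * Real.log (Real.exp 2 * n / I.card)
      - K * -Real.log δ / 2 ≤ ((x i - θ i) / σ) ^ 2})
    (fun i => measurableSet_le measurable_const (by fun_prop)) hne
    (fun x hx i hi hmiss => noise_lower_bound_of_notMem_ihat hσ hK hA₁ hδ hA1big.le Itil x θ
      hk hkn (not_le.mp hx)
      (mul_log_sub_one_le_sq_of_mem_minimizer (by positivity) θ I hmin hi) hmiss)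
    hsmall
    (fun i _ => measure_le_of_tail_bound (P θ) (fun x => ((x i - θ i) / σ) ^ 2)
      (C := Cξ) (m := 2 / αξ * r - K * -Real.log δ / 2) hαξ
      (fun M hM => by simpa using hA1 θ {i} M hM) ?_)).trans ?_
  · rw [hL]
    have : 0 < 2 / αξ := by positivity
    nlinarith [mul_nonneg hCξ.le hr]
  rw [← ENNReal.ofReal_add (by positivity) (by positivity)]
  apply ENNReal.ofReal_le_ofReal
  rw [add_mul, mul_assoc (max Hξ 1), ← Real.exp_add]
  refine add_le_add (mul_le_mul_of_nonneg_left (Real.exp_le_exp.mpr ?_) hH₀.le)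
    (mul_le_mul_of_nonneg_left (Real.exp_le_exp.mpr ?_) hH1.le)
  · have hell : r ≤ ell n I.card := by
      have : (1 : ℝ) ≤ I.card := by exact_mod_cast hk
      rw [ell, hL]
      nlinarith
    nlinarith
  · have : αξ * (2 / αξ * r) = 2 * r := by field_simp
    nlinarith
end

section
/- Assume Condition (A1) and the standing assumptions. Then there exist constants H₆, α₆ > 0, depending only on the constants of (A1) and of the standing assumptions, such that for every θ ∈ Θ(K) the false non-discovery rate of the selector satisfies E_θ[ |I_*∖Î(K)| / (n − |Î(K)|) ] ≤ H₆·(n/(|I_*| ∨ 1))^{−α₆} (with the convention 0/0 := 0 when Î(K) = [n]). -/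
open MeasureTheory Finset
open scoped Classical

/-- `ell n (k + 1) - ell n k` dominates the derivative of `x ↦ x log (e² n / x)` at `k + 1`. -/
lemma log_sub_one_le_ell_succ_sub {n : ℕ} (hn : 0 < n) (k : ℕ) :
    Real.log (Real.exp 2 * n / (k + 1 : ℕ)) - 1 ≤ ell n (k + 1) - ell n k := by
  have hn' : (0 : ℝ) < n := by exact_mod_cast hn
  have hQ : Real.exp 2 * n ≠ 0 := by positivity
  rcases Nat.eq_zero_or_pos k with rfl | hk
  · simp [ell]
  have hk' : (0 : ℝ) < k := by exact_mod_cast hk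
  have h := Real.log_le_sub_one_of_pos (x := ((k : ℝ) + 1) / k) (by positivity)
  have h2 : (k : ℝ) * Real.log (((k : ℝ) + 1) / k) ≤ 1 := by
    calc (k : ℝ) * Real.log (((k : ℝ) + 1) / k) ≤ k * (((k : ℝ) + 1) / k - 1) := by gcongr
      _ = 1 := by field_simp; ring
  rw [Real.log_div (by positivity) hk'.ne'] at h2
  unfold ell
  push_cast
  rw [Real.log_div hQ (by positivity), Real.log_div hQ hk'.ne']
  linarith

lemma ell_succ_sub_lt_log {n k : ℕ} (hn : 0 < n) (hk : 0 < k) :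
    ell n (k + 1) - ell n k < Real.log (Real.exp 2 * n / k) := by
  have hn' : (0 : ℝ) < n := by exact_mod_cast hn
  have hk' : (0 : ℝ) < k := by exact_mod_cast hk
  have hQ : Real.exp 2 * n ≠ 0 := by positivity
  have h : Real.log k < Real.log ((k : ℝ) + 1) := Real.log_lt_log hk' (by linarith)
  unfold ell
  push_cast
  rw [Real.log_div hQ (by positivity), Real.log_div hQ hk'.ne']
  nlinarith

/-- Every coordinate belonging to a minimizer of the penalized criterion is large. -/
lemma sq_lower_of_mem_minimizer {n : ℕ} {A σ : ℝ} (hA : 0 < A) (y : Fin n → ℝ)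
    {I : Finset (Fin n)}
    (hI : ∀ J : Finset (Fin n), (∑ i ∈ Iᶜ, y i ^ 2) + A * σ ^ 2 * ell n I.card
      ≤ (∑ i ∈ Jᶜ, y i ^ 2) + A * σ ^ 2 * ell n J.card) {i : Fin n} (hi : i ∈ I) :
    A * σ ^ 2 * (Real.log (Real.exp 2 * n / I.card) - 1) ≤ y i ^ 2 := by
  have h := hI (I.erase i)
  have hc := Finset.card_erase_add_one hi
  rw [Finset.compl_erase, Finset.sum_insert (by simpa using hi)] at h
  have hl := log_sub_one_le_ell_succ_sub i.pos (I.erase i).card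
  rw [hc] at hl
  have := mul_le_mul_of_nonneg_left hl (by positivity : 0 ≤ A * σ ^ 2)
  linarith

/-- Every coordinate outside a nonempty minimizer of the penalized criterion is small. -/
lemma sq_lt_of_notMem_minimizer {n : ℕ} {A σ : ℝ} (hA : 0 < A) (hσ : 0 < σ) (y : Fin n → ℝ)
    {I : Finset (Fin n)}
    (hI : ∀ J : Finset (Fin n), (∑ i ∈ Iᶜ, y i ^ 2) + A * σ ^ 2 * ell n I.card
      ≤ (∑ i ∈ Jᶜ, y i ^ 2) + A * σ ^ 2 * ell n J.card) (hne : I.Nonempty)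
    {i : Fin n} (hi : i ∉ I) :
    y i ^ 2 < A * σ ^ 2 * Real.log (Real.exp 2 * n / I.card) := by
  have h := hI (insert i I)
  rw [Finset.card_insert_of_notMem hi, Finset.compl_insert] at h
  have hs := Finset.add_sum_erase Iᶜ (fun j => y j ^ 2) (Finset.mem_compl.2 hi)
  have := mul_lt_mul_of_pos_left (ell_succ_sub_lt_log i.pos hne.card_pos)
    (by positivity : 0 < A * σ ^ 2)
  linarith

lemma ihat_subset {n : ℕ} {K σ : ℝ} (hK : 0 < K) (hσ : 0 < σ)
    (Itil : (Fin n → ℝ) → Finset (Fin n)) (x : Fin n → ℝ)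
    (h : ∀ I : Finset (Fin n), (∑ i ∈ (Itil x)ᶜ, x i ^ 2) + K * σ ^ 2 * ell n (Itil x).card
      ≤ (∑ i ∈ Iᶜ, x i ^ 2) + K * σ ^ 2 * ell n I.card) :
    ihat K σ Itil x ⊆ Itil x := by
  unfold ihat
  split_ifs with he
  · exact Finset.empty_subset _
  · intro i hi
    by_contra hni
    have := sq_lt_of_notMem_minimizer hK hσ x h (Finset.nonempty_iff_ne_empty.2 he) hni
    exact absurd (Finset.mem_filter.1 hi).2 (not_le.2 this)

/-- A large mean together with a small observation forces a large noise. -/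
lemma noise_sq_lower {C α A K σ L c x θ : ℝ} (hC : 0 < C) (hσ : 0 < σ) (hA : 0 < A)
    (hbig : K / 2 + α⁻¹ * ((C * α + 2) / 2 + 1) < A / 6) (hα : 0 < α) (hL : 2 ≤ L)
    (hθ : A * σ ^ 2 * (L - 1) ≤ θ ^ 2) (hx : x ^ 2 ≤ K * σ ^ 2 * (L + c)) :
    C + (2 * L / α - K / 2 * c) ≤ ((x - θ) / σ) ^ 2 := by
  have hM : α⁻¹ * ((C * α + 2) / 2 + 1) = C / 2 + 2 / α := by field_simp; ring
  rw [hM] at hbig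
  have h1 : A / 2 * σ ^ 2 * L ≤ θ ^ 2 := by
    have : 0 ≤ A * σ ^ 2 * (L - 2) := mul_nonneg (by positivity) (by linarith)
    linarith
  have h2 : θ ^ 2 ≤ 3 / 2 * x ^ 2 + 3 * (x - θ) ^ 2 := by
    nlinarith [sq_nonneg (3 * x - 2 * θ)]
  have h3 : C + (2 * L / α - K / 2 * c) ≤ A / 6 * L - K / 2 * (L + c) := by
    have := mul_le_mul_of_nonneg_right hbig.le (by linarith : 0 ≤ L)
    have e : 2 * L / α = 2 / α * L := by ring
    nlinarith
  rw [div_pow, le_div_iff₀ (by positivity)]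
  calc (C + (2 * L / α - K / 2 * c)) * σ ^ 2 ≤ (A / 6 * L - K / 2 * (L + c)) * σ ^ 2 := by gcongr
    _ ≤ (x - θ) ^ 2 := by linarith

/-- A `[0, 1]`-valued function bounded off `B` by a weighted count of events has integral at most
the measure of `B` plus the weighted sum of the measures; no measurability is needed. -/
lemma lintegral_le_of_le_count {Ω ι : Type*} [MeasurableSpace Ω] (μ : Measure Ω)
    (f : Ω → ENNReal) (B : Set Ω) (S : Finset ι) (G : ι → Set Ω) (c : ENNReal)
    (h1 : ∀ x, f x ≤ 1)
    (hG : ∀ x, x ∉ B → f x ≤ c * ∑ i ∈ S, (G i).indicator (fun _ => (1 : ENNReal)) x) :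
    ∫⁻ x, f x ∂μ ≤ μ B + c * ∑ i ∈ S, μ (G i) := by
  have hm : ∀ s : Set Ω, Measurable ((toMeasurable μ s).indicator fun _ => (1 : ENNReal)) :=
    fun s => measurable_const.indicator (measurableSet_toMeasurable μ s)
  calc ∫⁻ x, f x ∂μ
      ≤ ∫⁻ x, ((toMeasurable μ B).indicator (fun _ => (1 : ENNReal)) x +
          c * ∑ i ∈ S, (toMeasurable μ (G i)).indicator (fun _ => (1 : ENNReal)) x) ∂μ := by
        refine lintegral_mono fun x => ?_
        by_cases hx : x ∈ toMeasurable μ B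
        · simp only [Set.indicator_of_mem hx]
          exact (h1 x).trans le_self_add
        · refine (hG x fun h => hx (subset_toMeasurable μ B h)).trans ?_
          refine le_trans ?_ le_add_self
          gcongr with i hi
          exact subset_toMeasurable μ (G i)
    _ = μ B + c * ∑ i ∈ S, μ (G i) := by
        rw [lintegral_add_left (hm B),
          lintegral_const_mul _ (Finset.measurable_sum S fun i _ => hm (G i)),
          lintegral_finsetSum S fun i _ => hm (G i)]
        simp [lintegral_indicator, measure_toMeasurable]

lemma exp_neg_mul_log_le_rpow {ρ a α : ℝ} (hρ : 1 ≤ ρ) (hα : 0 < α) (ha : α ≤ a) :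
    Real.exp (-a * Real.log (Real.exp 2 * ρ)) ≤ ρ ^ (-α) := by
  have h0 : 0 < ρ := by linarith
  have hl : 0 ≤ Real.log ρ := Real.log_nonneg hρ
  rw [Real.rpow_def_of_pos h0, Real.log_mul (Real.exp_pos 2).ne' h0.ne', Real.log_exp]
  refine Real.exp_le_exp.2 ?_
  nlinarith

/-- The proportion of false non-discoveries is at most one. -/
lemma card_sdiff_div_le_one {n : ℕ} (I J : Finset (Fin n)) :
    ((I \ J).card : ℝ) / ((n : ℝ) - (J.card : ℝ)) ≤ 1 := by
  have h : (I \ J).card + J.card ≤ n := by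
    rw [Finset.card_sdiff_add_card]
    simpa using Finset.card_le_univ (I ∪ J)
  have h' : ((I \ J).card : ℝ) + J.card ≤ n := by exact_mod_cast h
  exact div_le_one_of_le₀ (by linarith) (by linarith [Nat.cast_nonneg (α := ℝ) (I \ J).card])

set_option maxHeartbeats 800000 in
theorem stmt_11 (Cξ Hξ αξ : ℝ) (hCξ : 0 < Cξ) (hHξ : 0 < Hξ) (hαξ : 0 < αξ)
    (K A₀ A₁ α₀ α₁' M₁ δ : ℝ)
    (hK : 0 < K) (hA₀ : 0 < A₀) (hA₁ : 0 < A₁) (hα₀ : 0 < α₀) (hα₁' : 0 < α₁')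
    (hM₁ : 1 < M₁) (hδ : 0 < δ) (hδ1 : δ < 1) (hA01 : A₀ ≤ A₁)
    (hKC : A₀ + Cξ < K / 2)
    (hA1big : K / 2 + αξ⁻¹ * ((Cξ * αξ + 2) / 2 + 1) < A₁ / 6) :
    ∃ H₆ α₆ : ℝ, 0 < H₆ ∧ 0 < α₆ ∧
      ∀ (n : ℕ) (σ : ℝ), 0 < σ →
        ∀ P : (Fin n → ℝ) → Measure (Fin n → ℝ),
          (∀ θ, IsProbabilityMeasure (P θ)) →
          (∀ (θ : Fin n → ℝ) (I : Finset (Fin n)) (M : ℝ), 0 ≤ M →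
              P θ {x | Cξ * I.card + M ≤ ∑ i ∈ I, ((x i - θ i) / σ) ^ 2}
                ≤ ENNReal.ofReal (Hξ * Real.exp (-αξ * M))) →
          ∀ Itil : (Fin n → ℝ) → Finset (Fin n),
            (∀ (x : Fin n → ℝ) (I : Finset (Fin n)),
                (∑ i ∈ (Itil x)ᶜ, x i ^ 2) + K * σ ^ 2 * ell n (Itil x).card
                  ≤ (∑ i ∈ Iᶜ, x i ^ 2) + K * σ ^ 2 * ell n I.card) →
            ∀ Istar : ℝ → (Fin n → ℝ) → Finset (Fin n),
              (∀ (A : ℝ) (θ : Fin n → ℝ), 0 < A → ∀ I : Finset (Fin n),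
                  (∑ i ∈ (Istar A θ)ᶜ, θ i ^ 2) + A * σ ^ 2 * ell n (Istar A θ).card
                    ≤ (∑ i ∈ Iᶜ, θ i ^ 2) + A * σ ^ 2 * ell n I.card) →
              (∀ (θ : Fin n → ℝ) (M : ℝ), 0 ≤ M →
                  P θ {x | M₁ * (Istar A₀ θ).card + M ≤ ((Itil x).card : ℝ)}
                    ≤ ENNReal.ofReal (Hξ / (1 - Real.exp (-1)) *
                        Real.exp (-α₀ * ell n (Istar A₀ θ).card - α₀ * M / 2))) →
              (∀ θ : Fin n → ℝ,
                  P θ {x | ((Itil x).card : ℝ) ≤ δ * (Istar A₁ θ).card}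
                    ≤ ENNReal.ofReal (Hξ / (1 - Real.exp (-1)) *
                        Real.exp (-α₁' * ell n (Istar A₁ θ).card))) →
              ∀ θ : Fin n → ℝ, Istar A₁ θ = Istar A₀ θ →
                (∫⁻ x, ENNReal.ofReal
                    (((Istar A₁ θ \ ihat K σ Itil x).card : ℝ) /
                      ((n : ℝ) - ((ihat K σ Itil x).card : ℝ))) ∂(P θ))
                  ≤ ENNReal.ofReal
                      (H₆ * ((n : ℝ) / (↑(max (Istar A₁ θ).card 1))) ^ (-α₆)) := by
  have hH₀ : 0 < Hξ / (1 - Real.exp (-1)) :=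
    div_pos hHξ (by simp)
  set H₀ := Hξ / (1 - Real.exp (-1))
  set c := Real.log (1 / δ)
  set D := max Hξ 1 * Real.exp (αξ * (K / 2 * c)) with hD
  have hDpos : 0 < D := by positivity
  set α₆ := min (min α₀ α₁') 2
  have hα₆pos : 0 < α₆ := by positivity
  have hα₆0 : α₆ ≤ α₀ := (min_le_left _ _).trans (min_le_left _ _)
  have hα₆1 : α₆ ≤ α₁' := (min_le_left _ _).trans (min_le_right _ _)
  have hα₆2 : α₆ ≤ 2 := min_le_right _ _
  have hM₁pos : 0 < (2 * M₁) ^ α₆ := by positivity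
  refine ⟨2 * H₀ + 2 * D + (2 * M₁) ^ α₆, α₆, by positivity, hα₆pos, ?_⟩
  intro n σ hσ P hP hA1 Itil hItil Istar hIstar hover hunder θ hθ
  have := hP θ
  set I := Istar A₁ θ
  rcases I.eq_empty_or_nonempty with hIe | hIne
  · simp [hIe]
  have hspos : 0 < I.card := hIne.card_pos
  have hsn : I.card ≤ n := by simpa using Finset.card_le_univ I
  rw [max_eq_left (Nat.succ_le_of_lt hspos)]
  have hs1 : (1 : ℝ) ≤ I.card := by exact_mod_cast hspos
  have hsn' : (I.card : ℝ) ≤ n := by exact_mod_cast hsn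
  have hn' : (0 : ℝ) < n := by linarith
  set s : ℝ := (I.card : ℝ)
  have hs0 : 0 < s := by linarith
  have hρ : 1 ≤ (n : ℝ) / s := (one_le_div hs0).2 hsn'
  set ρ : ℝ := (n : ℝ) / s with hρdef
  have hρ0 : 0 < ρ := by linarith
  have hρα : 0 < ρ ^ (-α₆) := by positivity
  have hle1 : ∀ x, ENNReal.ofReal (((I \ ihat K σ Itil x).card : ℝ) /
      ((n : ℝ) - ((ihat K σ Itil x).card : ℝ))) ≤ 1 := fun x =>
    ENNReal.ofReal_le_one.2 (card_sdiff_div_le_one _ _)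
  by_cases hbigs : (n : ℝ) < 2 * (M₁ * s)
  · calc _ ≤ ∫⁻ _, 1 ∂(P θ) := lintegral_mono hle1
      _ = 1 := by simp
      _ ≤ _ := by
        rw [ENNReal.one_le_ofReal]
        have h1 : 1 ≤ (2 * M₁) ^ α₆ * ρ ^ (-α₆) := by
          rw [Real.rpow_neg hρ0.le, ← div_eq_mul_inv, one_le_div (by positivity)]
          refine Real.rpow_le_rpow hρ0.le ?_ hα₆pos.le
          rw [hρdef, div_le_iff₀ hs0]
          linarith
        nlinarith [mul_pos hH₀ hρα, mul_pos hDpos hρα]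
  push Not at hbigs
  set L := Real.log (Real.exp 2 * n / s) with hL
  have hLρ : L = Real.log (Real.exp 2 * ρ) := by rw [hL, hρdef, mul_div_assoc]
  have hL2 : 2 ≤ L := by
    rw [hLρ, Real.log_mul (Real.exp_pos 2).ne' hρ0.ne', Real.log_exp]
    linarith [Real.log_nonneg hρ]
  have hell : L ≤ ell n I.card := by
    change L ≤ s * L
    nlinarith
  have hdecay : ∀ a, α₆ ≤ a → Real.exp (-a * L) ≤ ρ ^ (-α₆) := fun a ha => by
    rw [hLρ]
    exact exp_neg_mul_log_le_rpow hρ hα₆pos ha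
  set B₀ : Set (Fin n → ℝ) := {x | M₁ * s + 0 ≤ ((Itil x).card : ℝ)} with hB₀
  set B₁ : Set (Fin n → ℝ) := {x | ((Itil x).card : ℝ) ≤ δ * s} with hB₁
  set G : Fin n → Set (Fin n → ℝ) := fun i =>
    {x | Cξ + (2 * L / αξ - K / 2 * c) ≤ ((x i - θ i) / σ) ^ 2}
  have hPB₀ : P θ B₀ ≤ ENNReal.ofReal (H₀ * ρ ^ (-α₆)) := by
    have h := hover θ 0 le_rfl
    rw [← hθ] at h
    refine h.trans (ENNReal.ofReal_le_ofReal ?_)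
    gcongr
    refine le_trans (Real.exp_le_exp.2 ?_) (hdecay α₀ hα₆0)
    nlinarith
  have hPB₁ : P θ B₁ ≤ ENNReal.ofReal (H₀ * ρ ^ (-α₆)) := by
    refine (hunder θ).trans (ENNReal.ofReal_le_ofReal ?_)
    gcongr
    refine le_trans (Real.exp_le_exp.2 ?_) (hdecay α₁' hα₆1)
    nlinarith
  have hPG : ∀ i ∈ I, P θ (G i) ≤ ENNReal.ofReal (D * ρ ^ (-α₆)) := by
    intro i _
    set M := 2 * L / αξ - K / 2 * c with hM
    have hexp : Real.exp (-αξ * M) = Real.exp (αξ * (K / 2 * c)) * Real.exp (-2 * L) := by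
      rw [← Real.exp_add, hM]
      congr 1
      field_simp
      ring
    have htail : P θ (G i) ≤ ENNReal.ofReal (max Hξ 1 * Real.exp (-αξ * M)) := by
      rcases le_total 0 M with h0 | h0
      · have h := hA1 θ {i} M h0
        simp only [Finset.card_singleton, Nat.cast_one, mul_one, Finset.sum_singleton] at h
        refine h.trans (ENNReal.ofReal_le_ofReal ?_)
        gcongr
        exact le_max_left _ _
      · refine prob_le_one.trans (ENNReal.one_le_ofReal.2 ?_)
        have h1 : 1 ≤ Real.exp (-αξ * M) := Real.one_le_exp (by nlinarith)
        nlinarith [le_max_right Hξ 1]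
    refine htail.trans (ENNReal.ofReal_le_ofReal ?_)
    rw [hexp, ← mul_assoc, ← hD]
    gcongr
    exact hdecay 2 hα₆2
  have hpoint : ∀ x, x ∉ B₀ ∪ B₁ →
      ENNReal.ofReal (((I \ ihat K σ Itil x).card : ℝ) /
        ((n : ℝ) - ((ihat K σ Itil x).card : ℝ))) ≤
      ENNReal.ofReal (2 / n) *
        ∑ i ∈ I, (G i).indicator (fun _ => (1 : ENNReal)) x := by
    intro x hx
    simp only [hB₀, hB₁, Set.mem_union, Set.mem_ofPred_eq, not_or, not_le, add_zero] at hx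
    obtain ⟨hx₀, hx₁⟩ := hx
    have hcard : ((ihat K σ Itil x).card : ℝ) ≤ (Itil x).card := by
      exact_mod_cast Finset.card_le_card (ihat_subset hK hσ Itil x (hItil x))
    have hpos : 0 < ((Itil x).card : ℝ) := lt_trans (by positivity) hx₁
    have hne : Itil x ≠ ∅ := by
      intro h
      simp [h] at hpos
    have hmem : ∀ i ∈ I \ ihat K σ Itil x, x ∈ G i := by
      intro i hi
      obtain ⟨hiI, hin⟩ := Finset.mem_sdiff.1 hi
      have hxi : x i ^ 2 ≤ K * σ ^ 2 * Real.log (Real.exp 2 * (n : ℝ) / (Itil x).card) := by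
        by_contra! hlt
        exact hin (by simp [ihat, hne, hlt.le])
      refine noise_sq_lower hCξ hσ hA₁ hA1big hαξ hL2
        (sq_lower_of_mem_minimizer hA₁ θ (hIstar A₁ θ hA₁) hiI) (hxi.trans ?_)
      gcongr
      rw [hL, ← Real.log_mul (by positivity) (by positivity)]
      refine Real.log_le_log (by positivity) ?_
      rw [div_mul_div_comm, mul_one]
      exact div_le_div_of_nonneg_left (by positivity) (by positivity) (by linarith)
    have hcount : (((I \ ihat K σ Itil x).card : ℕ) : ENNReal) ≤
        ∑ i ∈ I, (G i).indicator (fun _ => (1 : ENNReal)) x := by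
      calc (((I \ ihat K σ Itil x).card : ℕ) : ENNReal)
          = ∑ i ∈ I \ ihat K σ Itil x, (G i).indicator (fun _ => (1 : ENNReal)) x := by
            rw [Finset.sum_congr rfl fun i hi => Set.indicator_of_mem (hmem i hi) _]
            simp
        _ ≤ _ := Finset.sum_le_sum_of_subset Finset.sdiff_subset
    have hden : ((I \ ihat K σ Itil x).card : ℝ) / ((n : ℝ) - ((ihat K σ Itil x).card : ℝ)) ≤
        2 / n * (I \ ihat K σ Itil x).card := by
      calc _ ≤ ((I \ ihat K σ Itil x).card : ℝ) / (n / 2) := by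
            gcongr
            linarith
        _ = _ := by field_simp
    refine (ENNReal.ofReal_le_ofReal hden).trans ?_
    rw [ENNReal.ofReal_mul (by positivity), ENNReal.ofReal_natCast]
    gcongr
  refine (lintegral_le_of_le_count (P θ) _ (B₀ ∪ B₁) I G _ hle1 hpoint).trans ?_
  calc P θ (B₀ ∪ B₁) + ENNReal.ofReal (2 / n) * ∑ i ∈ I, P θ (G i)
      ≤ (ENNReal.ofReal (H₀ * ρ ^ (-α₆)) + ENNReal.ofReal (H₀ * ρ ^ (-α₆))) +
        ENNReal.ofReal (2 / n) * ∑ _i ∈ I, ENNReal.ofReal (D * ρ ^ (-α₆)) := by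
        gcongr with i hi
        · exact (measure_union_le _ _).trans (add_le_add hPB₀ hPB₁)
        · exact hPG i hi
    _ = ENNReal.ofReal (H₀ * ρ ^ (-α₆) + H₀ * ρ ^ (-α₆) + 2 / n * (s * (D * ρ ^ (-α₆)))) := by
        rw [Finset.sum_const, nsmul_eq_mul, ← ENNReal.ofReal_natCast,
          ← ENNReal.ofReal_mul (by positivity), ← ENNReal.ofReal_mul (by positivity),
          ← ENNReal.ofReal_add (by positivity) (by positivity),
          ← ENNReal.ofReal_add (by positivity) (by positivity)]
    _ ≤ _ := by
        refine ENNReal.ofReal_le_ofReal ?_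
        have h1 : 2 / n * s ≤ 2 := by
          rw [div_mul_eq_mul_div, div_le_iff₀ hn']
          linarith
        have h2 := mul_le_mul_of_nonneg_right h1 (mul_pos hDpos hρα).le
        nlinarith [mul_pos hM₁pos hρα]
end

section
/- Assume Condition (A1). Then for every θ ∈ ℝⁿ and every M ≥ 0: ℙ_θ( max_{I ⊆ [n]} [ ∑_{i∈I} ξ_i² − C_ξ|I| − α_ξ^{−1}( |I| + log C(n,|I|) ) ] ≥ M ) ≤ H₀·e^{−α_ξ M}, where C(n,k) denotes the binomial coefficient 'n choose k' and H₀ = H_ξ/(1 − e^{−1}). -/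
open MeasureTheory Finset
open scoped Classical

/-- Weighting each `I ⊆ [n]` by `e^{-|I|} / C(n, |I|)` gives total mass at most `1 / (1 - e⁻¹)`. -/
theorem sum_exp_neg_card_add_log_choose_le (n : ℕ) :
    ∑ I : Finset (Fin n), Real.exp (-((I.card : ℝ) + Real.log (n.choose I.card)))
      ≤ (1 - Real.exp (-1))⁻¹ := by
  have hcard := Finset.sum_powerset_apply_card (x := (univ : Finset (Fin n)))
    (fun k : ℕ => Real.exp (-((k : ℝ) + Real.log (n.choose k))))
  rw [Finset.powerset_univ, Finset.card_univ, Fintype.card_fin] at hcard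
  have hlt : Real.exp (-1) < 1 := by rw [← Real.exp_zero, Real.exp_lt_exp]; norm_num
  rw [hcard, ← tsum_geometric_of_lt_one (Real.exp_pos _).le hlt]
  refine le_trans (le_of_eq (Finset.sum_congr rfl fun k hk => ?_))
    ((summable_geometric_of_lt_one (Real.exp_pos _).le hlt).sum_le_tsum (range (n + 1))
      fun k _ => (pow_pos (Real.exp_pos _) k).le)
  have hpos : (0 : ℝ) < n.choose k := by
    exact_mod_cast Nat.choose_pos (Nat.lt_succ_iff.mp (Finset.mem_range.mp hk))
  rw [nsmul_eq_mul, neg_add, Real.exp_add, Real.exp_neg (Real.log _), Real.exp_log hpos,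
    ← Real.exp_nat_mul, mul_neg_one]
  field_simp

theorem stmt_15 (n : ℕ) (σ : ℝ) (hσ : 0 < σ)
    (Cξ Hξ αξ : ℝ) (hCξ : 0 < Cξ) (hHξ : 0 < Hξ) (hαξ : 0 < αξ)
    (P : (Fin n → ℝ) → Measure (Fin n → ℝ))
    (hP : ∀ θ, IsProbabilityMeasure (P θ))
    (hA1 : ∀ (θ : Fin n → ℝ) (I : Finset (Fin n)) (M : ℝ), 0 ≤ M →
      P θ {x | Cξ * I.card + M ≤ ∑ i ∈ I, ((x i - θ i) / σ) ^ 2}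
        ≤ ENNReal.ofReal (Hξ * Real.exp (-αξ * M)))
    (θ : Fin n → ℝ) (M : ℝ) (hM : 0 ≤ M) :
    P θ {x | M ≤ ⨆ I : Finset (Fin n),
          ((∑ i ∈ I, ((x i - θ i) / σ) ^ 2) - Cξ * I.card -
            αξ⁻¹ * ((I.card : ℝ) + Real.log (n.choose I.card)))}
      ≤ ENNReal.ofReal (Hξ / (1 - Real.exp (-1)) * Real.exp (-αξ * M)) := by
  have hsub : {x : Fin n → ℝ | M ≤ ⨆ I : Finset (Fin n),
      ((∑ i ∈ I, ((x i - θ i) / σ) ^ 2) - Cξ * I.card -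
        αξ⁻¹ * ((I.card : ℝ) + Real.log (n.choose I.card)))} ⊆
      ⋃ I : Finset (Fin n), {x | Cξ * I.card +
        (M + αξ⁻¹ * ((I.card : ℝ) + Real.log (n.choose I.card))) ≤
          ∑ i ∈ I, ((x i - θ i) / σ) ^ 2} := by
    intro x hx
    obtain ⟨I, hI⟩ := exists_eq_ciSup_of_finite (f := fun I : Finset (Fin n) =>
      (∑ i ∈ I, ((x i - θ i) / σ) ^ 2) - Cξ * I.card -
        αξ⁻¹ * ((I.card : ℝ) + Real.log (n.choose I.card)))
    rw [Set.mem_ofPred_eq, ← hI] at hx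
    exact Set.mem_iUnion.mpr ⟨I, by rw [Set.mem_ofPred_eq]; linarith⟩
  have hterm (I : Finset (Fin n)) :
      P θ {x | Cξ * I.card + (M + αξ⁻¹ * ((I.card : ℝ) + Real.log (n.choose I.card))) ≤
          ∑ i ∈ I, ((x i - θ i) / σ) ^ 2} ≤
        ENNReal.ofReal (Hξ * Real.exp (-αξ * M) *
          Real.exp (-((I.card : ℝ) + Real.log (n.choose I.card)))) := by
    refine (hA1 θ I _ ?_).trans_eq ?_
    · have := Real.log_natCast_nonneg (n.choose I.card)
      positivity
    · rw [mul_assoc, ← Real.exp_add]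
      congr 3
      field_simp
      ring
  calc _ ≤ _ := measure_mono hsub
    _ ≤ _ := measure_iUnion_fintype_le _ _
    _ ≤ _ := Finset.sum_le_sum fun I _ => hterm I
    _ = ENNReal.ofReal (Hξ * Real.exp (-αξ * M) * ∑ I : Finset (Fin n),
          Real.exp (-((I.card : ℝ) + Real.log (n.choose I.card)))) := by
      rw [Finset.mul_sum, ENNReal.ofReal_sum_of_nonneg fun I _ => by positivity]
    _ ≤ ENNReal.ofReal (Hξ * Real.exp (-αξ * M) * (1 - Real.exp (-1))⁻¹) := by
      gcongr
      exact sum_exp_neg_card_add_log_choose_le n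
    _ = _ := by rw [div_eq_mul_inv, mul_right_comm]
end

section
/- Assume Condition (A1). Let q′ > 1 and let M_ξ be any constant with M_ξ ≥ α_ξ^{−1}( (C_ξα_ξ + 2)/log q′ + 1 ). Then for every θ ∈ ℝⁿ and every M ≥ 0: ∑_{I ⊆ [n]} ℙ_θ( ∑_{i∈I} ξ_i² ≥ M_ξ·|I|·log(q′n/|I|) + M ) ≤ H₀·e^{−α_ξ M}, where the sum runs over all 2ⁿ subsets of [n], the quantity |I|·log(q′n/|I|) is interpreted as 0 for I = ∅, and H₀ = H_ξ/(1 − e^{−1}). -/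
open MeasureTheory Finset
open scoped Classical

/-- The number of `k`-subsets of an `n`-set, weighted by `(k / n) ^ k`, is at most `e ^ k`. -/
lemma choose_mul_div_pow_le_exp {n k : ℕ} (hk : k ≤ n) :
    (n.choose k : ℝ) * ((k : ℝ) / n) ^ k ≤ Real.exp k := by
  rcases Nat.eq_zero_or_pos n with rfl | hn
  · obtain rfl : k = 0 := by omega
    simp
  have hn' : (0 : ℝ) < n := by exact_mod_cast hn
  calc (n.choose k : ℝ) * ((k : ℝ) / n) ^ k
      ≤ (n : ℝ) ^ k / k.factorial * ((k : ℝ) / n) ^ k := by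
        gcongr
        exact Nat.choose_le_pow_div k n
    _ = (k : ℝ) ^ k / k.factorial := by
        rw [div_pow]
        field_simp
    _ ≤ Real.exp k := Real.pow_div_factorial_le_exp _ (Nat.cast_nonneg k) k

/-- The excess of `m * k * log (q * n / k)` over `C * k` is large enough, after multiplication by
`a`, to pay for `2 * k` and for the factor `(k / n) ^ k`. -/
lemma excess_nonneg_and_exp_le {C a q m : ℝ} {n k : ℕ} (hC : 0 < C) (ha : 0 < a) (hq : 1 < q)
    (hm : a⁻¹ * ((C * a + 2) / Real.log q + 1) ≤ m) (hk : k ≤ n) :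
    0 ≤ m * k * Real.log (q * n / k) - C * k ∧
      Real.exp (-a * (m * k * Real.log (q * n / k) - C * k)) ≤
        Real.exp (-2 * k) * ((k : ℝ) / n) ^ k := by
  rcases Nat.eq_zero_or_pos k with rfl | hk0
  · simp
  have hk' : (0 : ℝ) < k := by exact_mod_cast hk0
  have hkn : (k : ℝ) ≤ n := by exact_mod_cast hk
  have hn' : (0 : ℝ) < n := hk'.trans_le hkn
  have hlq : 0 < Real.log q := Real.log_pos hq
  have hlog : Real.log (q * n / k) = Real.log q - Real.log ((k : ℝ) / n) := by
    rw [← Real.log_div (by positivity) (by positivity)]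
    congr 1
    field_simp
  have hle : Real.log ((k : ℝ) / n) ≤ 0 :=
    Real.log_nonpos (by positivity) ((div_le_one hn').2 hkn)
  have hpow : ((k : ℝ) / n) ^ k = Real.exp (k * Real.log ((k : ℝ) / n)) := by
    rw [Real.exp_nat_mul, Real.exp_log (by positivity)]
  rw [hpow, hlog, ← Real.exp_add, Real.exp_le_exp]
  set l := Real.log ((k : ℝ) / n)
  have ham : (C * a + 2) / Real.log q + 1 ≤ a * m := by
    rwa [inv_mul_le_iff₀ ha] at hm
  have hratio : C * a + 2 ≤ (C * a + 2) / Real.log q * (Real.log q - l) := by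
    rw [div_mul_eq_mul_div, le_div_iff₀ hlq]
    gcongr
    linarith
  have hone : C * a + 2 + (Real.log q - l) ≤ a * m * (Real.log q - l) := by
    have := mul_le_mul_of_nonneg_right ham (by linarith : 0 ≤ Real.log q - l)
    linarith
  have hmain := mul_le_mul_of_nonneg_left hone hk'.le
  have hqk : 0 < k * Real.log q := by positivity
  have hlk : k * l ≤ 0 := mul_nonpos_of_nonneg_of_nonpos hk'.le hle
  constructor
  · refine nonneg_of_mul_nonneg_right (?_ : 0 ≤ a * _) ha
    nlinarith
  · nlinarith

/-- Summing the weights `e ^ (-2 |I|) (|I| / n) ^ |I|` over all subsets `I` of an `n`-set. -/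
lemma sum_exp_mul_div_pow_card_le (n : ℕ) :
    ∑ I : Finset (Fin n), Real.exp (-2 * (#I : ℝ)) * ((#I : ℝ) / n) ^ #I
      ≤ (1 - Real.exp (-1))⁻¹ := by
  have hlt : Real.exp (-1) < 1 := Real.exp_lt_one_iff.2 (by norm_num)
  rw [← Finset.powerset_univ,
    Finset.sum_powerset_apply_card (fun k : ℕ => Real.exp (-2 * (k : ℝ)) * ((k : ℝ) / n) ^ k),
    Finset.card_univ, Fintype.card_fin, ← tsum_geometric_of_lt_one (Real.exp_pos _).le hlt]
  refine le_trans (Finset.sum_le_sum fun k hk => ?_)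
    ((summable_geometric_of_lt_one (Real.exp_pos _).le hlt).sum_le_tsum (range (n + 1))
      fun k _ => by positivity)
  have hkn : k ≤ n := by simpa [Nat.lt_succ_iff] using hk
  calc n.choose k • (Real.exp (-2 * (k : ℝ)) * ((k : ℝ) / n) ^ k)
      = Real.exp (-2 * (k : ℝ)) * (n.choose k * ((k : ℝ) / n) ^ k) := by
        rw [nsmul_eq_mul]
        ring
    _ ≤ Real.exp (-2 * (k : ℝ)) * Real.exp k := by
        gcongr
        exact choose_mul_div_pow_le_exp hkn
    _ = Real.exp (-1) ^ k := by
        rw [← Real.exp_add, ← Real.exp_nat_mul]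
        congr 1
        ring

theorem stmt_16 (n : ℕ) (σ : ℝ) (hσ : 0 < σ)
    (Cξ Hξ αξ : ℝ) (hCξ : 0 < Cξ) (hHξ : 0 < Hξ) (hαξ : 0 < αξ)
    (P : (Fin n → ℝ) → Measure (Fin n → ℝ))
    (hP : ∀ θ, IsProbabilityMeasure (P θ))
    (hA1 : ∀ (θ : Fin n → ℝ) (I : Finset (Fin n)) (M : ℝ), 0 ≤ M →
      P θ {x | Cξ * I.card + M ≤ ∑ i ∈ I, ((x i - θ i) / σ) ^ 2}
        ≤ ENNReal.ofReal (Hξ * Real.exp (-αξ * M)))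
    (q' Mξ : ℝ) (hq' : 1 < q')
    (hMξ : αξ⁻¹ * ((Cξ * αξ + 2) / Real.log q' + 1) ≤ Mξ)
    (θ : Fin n → ℝ) (M : ℝ) (hM : 0 ≤ M) :
    (∑ I : Finset (Fin n),
        P θ {x | Mξ * I.card * Real.log (q' * n / I.card) + M
          ≤ ∑ i ∈ I, ((x i - θ i) / σ) ^ 2})
      ≤ ENNReal.ofReal (Hξ / (1 - Real.exp (-1)) * Real.exp (-αξ * M)) := by
  have hterm : ∀ I : Finset (Fin n),
      P θ {x | Mξ * I.card * Real.log (q' * n / I.card) + M ≤ ∑ i ∈ I, ((x i - θ i) / σ) ^ 2}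
        ≤ ENNReal.ofReal (Hξ * Real.exp (-αξ * M) *
          (Real.exp (-2 * (#I : ℝ)) * ((#I : ℝ) / n) ^ #I)) := by
    intro I
    obtain ⟨hnonneg, hexp⟩ := excess_nonneg_and_exp_le hCξ hαξ hq' hMξ
      (by simpa using I.card_le_univ : #I ≤ n)
    have htail := hA1 θ I (Mξ * #I * Real.log (q' * n / #I) - Cξ * #I + M) (by linarith)
    rw [← add_assoc, add_sub_cancel, mul_add, Real.exp_add] at htail
    refine htail.trans (ENNReal.ofReal_le_ofReal ?_)
    rw [mul_assoc Hξ, mul_comm (Real.exp (-αξ * M))]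
    gcongr
  refine (Finset.sum_le_sum fun I _ => hterm I).trans ?_
  rw [← ENNReal.ofReal_sum_of_nonneg fun I _ => by positivity, ← Finset.mul_sum]
  refine ENNReal.ofReal_le_ofReal ?_
  rw [div_mul_eq_mul_div, div_eq_mul_inv]
  gcongr
  exact sum_exp_mul_div_pow_card_le n
end
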